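/- Let r be an even natural number. Then the sum of the dimensions over ℝ of the eigenspaces of Φ_sym for the eigenvalues 1 and −1 is at least (r−6)/6 if r ≡ 0 (mod 6), at least (r−2)/6 if r ≡ 2 (mod 6), and at least (r+2)/6 if r ≡ 4 (mod 6). -/

import Mathlib

open MvPolynomial

/-- The substitution `(σ* f)(x,y) = f(x+y, y)` as a linear endomorphism of the
polynomial ring `ℝ[x,y]`. -/
noncomputable def sigmaStar : MvPolynomial (Fin 2) ℝ →ₗ[ℝ] MvPolynomial (Fin 2) ℝ :=
  (aeval ![X 0 + X 1, X 1]).toLinearMap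

/-- The substitution `(τ* f)(x,y) = f(x, x+y)` as a linear endomorphism of the
polynomial ring `ℝ[x,y]`. -/
noncomputable def tauStar : MvPolynomial (Fin 2) ℝ →ₗ[ℝ] MvPolynomial (Fin 2) ℝ :=
  (aeval ![X 0, X 0 + X 1]).toLinearMap

/-- The operator `Φ : f(x,y) ↦ f(x+y, y) + f(x, x+y)`.  It preserves the space of
homogeneous polynomials of each degree `r`. -/
noncomputable def Phi : MvPolynomial (Fin 2) ℝ →ₗ[ℝ] MvPolynomial (Fin 2) ℝ :=
  sigmaStar + tauStar

/-- The swap substitution `f(x,y) ↦ f(y,x)` as a linear endomorphism. -/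
noncomputable def swapStar : MvPolynomial (Fin 2) ℝ →ₗ[ℝ] MvPolynomial (Fin 2) ℝ :=
  (aeval ![X 1, X 0]).toLinearMap

/-- The space `V` of homogeneous polynomials of degree `r` in two variables. -/
noncomputable abbrev V (r : ℕ) : Submodule ℝ (MvPolynomial (Fin 2) ℝ) :=
  MvPolynomial.homogeneousSubmodule (Fin 2) ℝ r

/-- The subspace of `V` spanned by all polynomials of the form `f(x,y) - f(y,x)`. -/
noncomputable def K (r : ℕ) : Submodule ℝ ↥(V r) :=
  Submodule.span ℝ
    {g : ↥(V r) | ∃ f : ↥(V r),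
      (g : MvPolynomial (Fin 2) ℝ) = (f : MvPolynomial (Fin 2) ℝ) - swapStar f}

/-!
Fix a sign `s = ±1`. If `f` is symmetric and `f(x, -y) = s f(x, y)`, then
`g = Φ f + s • f` is a symmetric function of the triple `x, y, -x - y`, so the forms `f` with
`Φ f = -s f` have codimension at most the dimension of the space of such `g`. A `g` vanishing to
order `2m` along the line `x = y` is divisible by the `2m`-th powers of the three differences of the
triple, hence is zero once `6m > r`. In the coordinates `x + y`, `x - y` only even powers
of `x - y` occur in `g`, so `r / 6 + 1` coefficients decide whether this happens. Finally, symmetric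
forms inject into `V_sym`.
-/

section LinearAlgebra

variable {F M N : Type*} [Field F] [AddCommGroup M] [Module F M] [AddCommGroup N] [Module F N]
  {p : Submodule F M} {q : Submodule F N} [FiniteDimensional F p] [FiniteDimensional F q]

lemma finrank_le_finrank_add_finrank_inf_ker (T : M →ₗ[F] N) (hT : ∀ x ∈ p, T x ∈ q) :
    Module.finrank F p ≤ Module.finrank F q + Module.finrank F ↥(p ⊓ LinearMap.ker T) := by
  have hker : (LinearMap.ker (T.domRestrict p)).map p.subtype = p ⊓ LinearMap.ker T := by
    rw [LinearMap.domRestrict, LinearMap.ker_comp, Submodule.map_comap_subtype]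
  have hrange : LinearMap.range (T.domRestrict p) ≤ q := by
    rintro _ ⟨x, rfl⟩
    exact hT x x.2
  rw [← hker, Submodule.finrank_map_subtype_eq,
    ← LinearMap.finrank_range_add_finrank_ker (T.domRestrict p)]
  gcongr
  exact Submodule.finrank_mono hrange

lemma finrank_le_of_disjoint_ker (T : M →ₗ[F] N) (hT : ∀ x ∈ p, T x ∈ q)
    (hdisj : Disjoint p (LinearMap.ker T)) : Module.finrank F p ≤ Module.finrank F q := by
  have hfinrank := finrank_le_finrank_add_finrank_inf_ker T hT
  rwa [hdisj.eq_bot, finrank_bot, add_zero] at hfinrank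

end LinearAlgebra

section LinearForms

variable {σ F : Type*} [Field F]

lemma irreducible_of_isHomogeneous_one {l : MvPolynomial σ F} (hl : l.IsHomogeneous 1)
    (hl0 : l ≠ 0) : Irreducible l := by
  refine irreducible_of_totalDegree_eq_one (hl.totalDegree hl0) fun c hc => ?_
  obtain ⟨d, hd⟩ := ne_zero_iff.1 hl0
  exact (ne_zero_of_dvd_ne_zero hd (hc d)).isUnit

lemma isRelPrime_of_eval_eq_zero {l g : MvPolynomial σ F} (hl : l.IsHomogeneous 1) (hl0 : l ≠ 0)
    {v : σ → F} (hlv : eval v l = 0) (hgv : eval v g ≠ 0) : IsRelPrime l g :=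
  (irreducible_of_isHomogeneous_one hl hl0).isRelPrime_iff_not_dvd.2 fun hdvd =>
    hgv (zero_dvd_iff.1 (hlv ▸ map_dvd (eval v) hdvd))

lemma eq_zero_of_forall_pow_dvd {ι : Type*} [Fintype ι] {l : ι → MvPolynomial σ F} {k : ℕ}
    {g : MvPolynomial σ F} (hl : ∀ i, (l i).IsHomogeneous 1) (hl0 : ∀ i, l i ≠ 0)
    (hrel : Pairwise (Function.onFun IsRelPrime l)) (hdvd : ∀ i, l i ^ k ∣ g)
    (hdeg : g.totalDegree < Fintype.card ι * k) : g = 0 := by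
  by_contra hg
  have hprod : ∏ i, l i ^ k ∣ g :=
    Fintype.prod_dvd_of_isRelPrime (fun i j hij => (hrel hij).pow) hdvd
  have hprod_degree : (∏ i, l i ^ k).totalDegree = Fintype.card ι * k := by
    have hhom : (∏ i, l i ^ k).IsHomogeneous (∑ _i : ι, 1 * k) :=
      IsHomogeneous.prod _ _ _ fun i _ => (hl i).pow k
    rw [hhom.totalDegree (Finset.prod_ne_zero_iff.2 fun i _ => pow_ne_zero k (hl0 i))]
    simp
  have := totalDegree_le_of_dvd_of_isDomain hprod hg
  omega

end LinearForms

section Substitution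

variable {σ R : Type*} [CommSemiring R]

lemma X_pow_dvd_of_coeff_eq_zero {i : σ} {k : ℕ} {f : MvPolynomial σ R}
    (hf : ∀ d : σ →₀ ℕ, d i < k → coeff d f = 0) : X i ^ k ∣ f := by
  rw [X_pow_eq_monomial, monomial_one_dvd_iff_modMonomial_eq_zero]
  ext d
  by_cases hd : Finsupp.single i k ≤ d
  · rw [coeff_modMonomial_of_le _ hd, coeff_zero]
  · rw [coeff_modMonomial_of_not_le _ hd, coeff_zero]
    exact hf d (not_le.1 (mt Finsupp.single_le_iff.2 hd))

lemma aeval_smul_of_isHomogeneous {A : Type*} [CommSemiring A] [Algebra R A]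
    {f : MvPolynomial σ R} {r : ℕ} (hf : f.IsHomogeneous r) (c : R) (v : σ → A) :
    aeval (c • v) f = c ^ r • aeval v f := by
  simp only [aeval_def, eval₂_eq, Finset.smul_sum]
  refine Finset.sum_congr rfl fun d hd => ?_
  have hdeg : ∑ i ∈ d.support, d i = r := (hf.degree_eq_sum_deg_support hd).symm
  simp only [Pi.smul_apply, smul_pow, Finset.prod_smul, Finset.prod_pow_eq_pow_sum, hdeg,
    mul_smul_comm]

lemma map_aeval_pair {A B : Type*} [CommSemiring A] [Algebra R A] [CommSemiring B] [Algebra R B]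
    (φ : A →ₐ[R] B) (a b : A) (f : MvPolynomial (Fin 2) R) :
    φ (aeval ![a, b] f) = aeval ![φ a, φ b] f := by
  rw [← AlgHom.comp_apply, comp_aeval]
  congr 2
  ext i
  fin_cases i <;> rfl

lemma aeval_X_pair (f : MvPolynomial (Fin 2) R) : aeval ![X 0, X 1] f = f := by
  conv_rhs => rw [← aeval_X_left_apply f]
  congr 2
  ext1 i
  fin_cases i <;> rfl

lemma isHomogeneous_aeval_pair {f a b : MvPolynomial (Fin 2) R} {r : ℕ} (hf : f.IsHomogeneous r)
    (ha : a.IsHomogeneous 1) (hb : b.IsHomogeneous 1) : (aeval ![a, b] f).IsHomogeneous r := by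
  simpa only [one_mul] using hf.aeval ![a, b] (Fin.forall_fin_two.2 ⟨ha, hb⟩)

lemma coeff_aeval_neg_right {R : Type*} [CommRing R] (f : MvPolynomial (Fin 2) R)
    (d : Fin 2 →₀ ℕ) : coeff d (aeval ![X 0, -X 1] f) = (-1) ^ d 1 * coeff d f := by
  induction f using MvPolynomial.induction_on' with
  | monomial u a =>
    have hmon : aeval ![X 0, -X 1] (monomial u a) = C ((-1) ^ u 1) * monomial u a := by
      rw [aeval_monomial, monomial_eq, Finsupp.prod_fintype _ _ (by simp),
        Finsupp.prod_fintype _ _ (by simp)]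
      simp only [Fin.prod_univ_two, Matrix.cons_val_zero, Matrix.cons_val_one, algebraMap_eq,
        neg_pow (X 1 : MvPolynomial (Fin 2) R), map_pow, map_neg, map_one]
      ring
    rw [hmon, coeff_C_mul, coeff_monomial]
    split_ifs with hud
    · rw [hud]
    · simp only [mul_zero]
  | add p q hp hq => rw [map_add, coeff_add, coeff_add, hp, hq, mul_add]

end Substitution

section BinaryMonomials

/-- The exponent vector of the monomial `x ^ (r - j) * y ^ j`, of degree `r` when `j ≤ r`. -/
noncomputable def binaryExponent (r j : ℕ) : Fin 2 →₀ ℕ :=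
  Finsupp.single 0 (r - j) + Finsupp.single 1 j

lemma binaryExponent_apply_one (r j : ℕ) : binaryExponent r j 1 = j := by
  simp [binaryExponent]

lemma binaryExponent_injective (r : ℕ) : Function.Injective (binaryExponent r) := fun i j h => by
  rw [← binaryExponent_apply_one r i, h, binaryExponent_apply_one]

lemma degree_binaryExponent {r j : ℕ} (hj : j ≤ r) : (binaryExponent r j).degree = r := by
  simp [binaryExponent, Finsupp.degree_eq_sum, hj]

lemma eq_binaryExponent_degree (d : Fin 2 →₀ ℕ) : d = binaryExponent d.degree (d 1) := by
  ext i
  fin_cases i <;> simp [binaryExponent, Finsupp.degree_eq_sum]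

variable {R : Type*} [CommSemiring R]

lemma monomial_binaryExponent (r j : ℕ) :
    monomial (binaryExponent r j) (1 : R) = X 0 ^ (r - j) * X 1 ^ j := by
  rw [X_pow_eq_monomial, X_pow_eq_monomial, monomial_mul, one_mul, binaryExponent]

variable (R) in
/-- The symmetrization of `x ^ (r - j) * y ^ j` under exchanging `x` and `y`; it is twice that
monomial when `2 * j = r`. -/
noncomputable def symmMonomial (r j : ℕ) : MvPolynomial (Fin 2) R :=
  X 0 ^ (r - j) * X 1 ^ j + X 0 ^ j * X 1 ^ (r - j)

lemma symmMonomial_eq_add_monomial {r j : ℕ} (hj : j ≤ r) :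
    symmMonomial R r j =
      monomial (binaryExponent r j) 1 + monomial (binaryExponent r (r - j)) 1 := by
  rw [monomial_binaryExponent, monomial_binaryExponent, Nat.sub_sub_self hj, symmMonomial]

lemma isHomogeneous_symmMonomial {r j : ℕ} (hj : j ≤ r) : (symmMonomial R r j).IsHomogeneous r := by
  rw [symmMonomial_eq_add_monomial hj]
  exact (isHomogeneous_monomial 1 (degree_binaryExponent hj)).add
    (isHomogeneous_monomial 1 (degree_binaryExponent (Nat.sub_le r j)))

lemma coeff_symmMonomial {r j : ℕ} (hj : j ≤ r) (k : ℕ) :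
    coeff (binaryExponent r k) (symmMonomial R r j) =
      (if j = k then 1 else 0) + if r - j = k then 1 else 0 := by
  simp only [symmMonomial_eq_add_monomial hj, coeff_add, coeff_monomial,
    (binaryExponent_injective r).eq_iff]

end BinaryMonomials

section SymmParityForms

instance finiteDimensional_homogeneousSubmodule {F : Type*} [Field F] (r : ℕ) :
    FiniteDimensional F (homogeneousSubmodule (Fin 2) F r) :=
  Module.Finite.iff_fg.2 (homogeneousSubmodule_fg ..)


/-- The binary forms `f` of degree `r` with `f(y, x) = f(x, y)` and `f(x, -y) = s f(x, y)`,
intended for `s = ±1`. -/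
def symmParityForms (R : Type*) [CommRing R] (r : ℕ) (s : R) :
    Submodule R (homogeneousSubmodule (Fin 2) R r) where
  carrier := {f | aeval ![X 1, X 0] f.1 = f.1 ∧ aeval ![X 0, -X 1] f.1 = s • f.1}
  add_mem' hf hg := by simp_all
  zero_mem' := by simp
  smul_mem' c f hf := by simp_all [smul_comm c s]

namespace symmParityForms

section Eval

variable {R A : Type*} [CommRing R] [CommRing A] [Algebra R A] {r : ℕ} {s : R}
  {f : homogeneousSubmodule (Fin 2) R r}

lemma aeval_swap (hf : f ∈ symmParityForms R r s) (a b : A) :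
    aeval ![b, a] f.1 = aeval ![a, b] f.1 := by
  simpa only [map_aeval_pair, aeval_X, Matrix.cons_val_zero, Matrix.cons_val_one] using
    congrArg (aeval ![a, b] : MvPolynomial (Fin 2) R →ₐ[R] A) hf.1

lemma aeval_neg_right (hf : f ∈ symmParityForms R r s) (a b : A) :
    aeval ![a, -b] f.1 = s • aeval ![a, b] f.1 := by
  simpa only [map_aeval_pair, map_neg, map_smul, aeval_X, Matrix.cons_val_zero,
    Matrix.cons_val_one] using congrArg (aeval ![a, b] : MvPolynomial (Fin 2) R →ₐ[R] A) hf.2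

lemma aeval_neg_left (hf : f ∈ symmParityForms R r s) (a b : A) :
    aeval ![-a, b] f.1 = s • aeval ![a, b] f.1 := by
  rw [aeval_swap hf, aeval_neg_right hf, aeval_swap hf]

end Eval

lemma symmMonomial_mem {R : Type*} [CommRing R] {r j : ℕ} (hr : Even r) (hj : j ≤ r) :
    ⟨symmMonomial R r j, isHomogeneous_symmMonomial hj⟩ ∈ symmParityForms R r ((-1) ^ j) := by
  have hsign : (-1 : MvPolynomial (Fin 2) R) ^ (r - j) = (-1) ^ j :=
    neg_one_pow_congr (by rw [Nat.even_sub hj]; simp [hr])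
  constructor
  · simp only [symmMonomial, map_add, map_mul, map_pow, aeval_X, Matrix.cons_val_zero,
      Matrix.cons_val_one]
    ring
  · simp only [symmMonomial, map_add, map_mul, map_pow, aeval_X, Matrix.cons_val_zero,
      Matrix.cons_val_one, neg_pow (X 1 : MvPolynomial (Fin 2) R), hsign, smul_eq_C_mul, map_neg,
      map_one]
    ring

variable {F : Type*} [Field F] [NeZero (2 : F)]

lemma linearIndependent_symmMonomial {ι : Type*} {r : ℕ} {j : ι → ℕ} (hj : Function.Injective j)
    (hjr : ∀ i, 2 * j i ≤ r) : LinearIndependent F fun i => symmMonomial F r (j i) := by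
  have hle (i : ι) : j i ≤ r := by have := hjr i; omega
  let c (i : ι) : F := coeff (binaryExponent r (j i)) (symmMonomial F r (j i))
  have hc (i : ι) : c i ≠ 0 := by
    simp only [c, coeff_symmMonomial (hle i), if_true]
    split_ifs
    · rw [one_add_one_eq_two]
      exact two_ne_zero
    · simp
  refine .of_pairwise_dual_eq_zero_one _ (fun i => (c i)⁻¹ • lcoeff F (binaryExponent r (j i)))
    (fun i k hik => ?_) fun i => inv_mul_cancel₀ (hc i)
  have hjik : j k ≠ j i := fun h => hik (hj h.symm)
  have hjik' : r - j k ≠ j i := by have := hjr i; have := hjr k; omega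
  simp [coeff_symmMonomial (hle k), hjik, hjik']

/- The bound counts the `j ≤ r / 2` of the form `2 * i + e`. -/
lemma le_finrank {r : ℕ} (hr : Even r) (e : ℕ) :
    (r / 2 + 2 - e) / 2 ≤ Module.finrank F (symmParityForms F r ((-1) ^ e)) := by
  have hle (i : Fin ((r / 2 + 2 - e) / 2)) : 2 * (2 * i + e) ≤ r := by omega
  let v (i : Fin ((r / 2 + 2 - e) / 2)) : symmParityForms F r ((-1) ^ e) :=
    ⟨⟨symmMonomial F r (2 * i + e), isHomogeneous_symmMonomial (by have := hle i; omega)⟩, by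
      have hsign : (-1 : F) ^ (2 * (i : ℕ) + e) = (-1) ^ e := by simp [pow_add, pow_mul]
      exact hsign ▸ symmMonomial_mem hr (by have := hle i; omega)⟩
  have hv : LinearIndependent F v :=
    .of_comp ((homogeneousSubmodule (Fin 2) F r).subtype ∘ₗ (symmParityForms F r _).subtype)
      (linearIndependent_symmMonomial (fun i k h => Fin.ext (by simpa using h)) hle)
  simpa using hv.fintype_card_le_finrank

end symmParityForms

end SymmParityForms

section TripleSymmForms

/-- The binary forms of degree `r` that are symmetric functions of `x, y, -x - y`. Invariance is
imposed for the transposition of `x` and `y` and the 3-cycle `x ↦ y ↦ -x - y ↦ x`. -/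
def tripleSymmForms (R : Type*) [CommRing R] (r : ℕ) :
    Submodule R (homogeneousSubmodule (Fin 2) R r) where
  carrier := {g | aeval ![X 1, X 0] g.1 = g.1 ∧ aeval ![X 1, -X 0 - X 1] g.1 = g.1}
  add_mem' hf hg := by simp_all
  zero_mem' := by simp
  smul_mem' c f hf := by simp_all

/-- The differences of cyclically consecutive members of the triple `x, y, -x - y`. -/
noncomputable def tripleDifference (R : Type*) [CommRing R] : Fin 3 → MvPolynomial (Fin 2) R :=
  ![X 0 - X 1, X 0 + 2 * X 1, -2 * X 0 - X 1]

/-- The substitution `g(x, y) ↦ g(x + y, x - y)`, taking the line `x = y` to the axis `y = 0`. -/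
noncomputable def mirrorCoordinates (R : Type*) [CommRing R] :
    MvPolynomial (Fin 2) R →ₐ[R] MvPolynomial (Fin 2) R :=
  aeval ![X 0 + X 1, X 0 - X 1]

/-- A point `(x, y)` on each of the lines `tripleDifference R i = 0`. -/
def collisionPoint (R : Type*) [CommRing R] : Fin 3 → Fin 2 → R :=
  ![![1, 1], ![-2, 1], ![1, -2]]

section Ring

variable {R : Type*} [CommRing R]

lemma isHomogeneous_tripleDifference (i : Fin 3) : (tripleDifference R i).IsHomogeneous 1 := by
  have hX (j : Fin 2) : (X j : MvPolynomial (Fin 2) R).IsHomogeneous 1 := isHomogeneous_X R j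
  have h2X (j : Fin 2) : (2 * X j : MvPolynomial (Fin 2) R).IsHomogeneous 1 := (hX j).C_mul 2
  fin_cases i
  · exact (hX 0).sub (hX 1)
  · exact (hX 0).add (h2X 1)
  · simpa [tripleDifference] using (h2X 0).neg.sub (hX 1)

lemma eval_tripleDifference (i j : Fin 3) : eval (collisionPoint R i) (tripleDifference R j) =
    3 * !![0, 1, -1; -1, 0, 1; 1, -1, 0] i j := by
  fin_cases i <;> fin_cases j <;> simp [collisionPoint, tripleDifference] <;> norm_num

lemma eval_tripleDifference_self (i : Fin 3) :
    eval (collisionPoint R i) (tripleDifference R i) = 0 := by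
  rw [eval_tripleDifference]
  fin_cases i <;> simp

section IsDomain

variable [IsDomain R] [NeZero (3 : R)]

lemma eval_tripleDifference_ne_zero {i j : Fin 3} (hij : i ≠ j) :
    eval (collisionPoint R i) (tripleDifference R j) ≠ 0 := by
  rw [eval_tripleDifference]
  refine mul_ne_zero three_ne_zero ?_
  fin_cases i <;> fin_cases j <;> simp at hij ⊢

lemma tripleDifference_ne_zero (i : Fin 3) : tripleDifference R i ≠ 0 := fun h =>
  eval_tripleDifference_ne_zero (R := R) (i := i + 1) (j := i) (by simp) (by rw [h, map_zero])

end IsDomain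

lemma isHomogeneous_mirrorCoordinates {f : MvPolynomial (Fin 2) R} {r : ℕ}
    (hf : f.IsHomogeneous r) : (mirrorCoordinates R f).IsHomogeneous r :=
  isHomogeneous_aeval_pair hf ((isHomogeneous_X R 0).add (isHomogeneous_X R 1))
    ((isHomogeneous_X R 0).sub (isHomogeneous_X R 1))

lemma mirrorCoordinates_mirrorCoordinates {f : MvPolynomial (Fin 2) R} {r : ℕ}
    (hf : f.IsHomogeneous r) : mirrorCoordinates R (mirrorCoordinates R f) = (2 : R) ^ r • f := by
  have h0 : (X 0 + X 1 : MvPolynomial (Fin 2) R) + (X 0 - X 1) = (2 : R) • X 0 := by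
    rw [two_smul]; ring
  have h1 : (X 0 + X 1 : MvPolynomial (Fin 2) R) - (X 0 - X 1) = (2 : R) • X 1 := by
    rw [two_smul]; ring
  calc mirrorCoordinates R (mirrorCoordinates R f)
      = aeval ((2 : R) • ![X 0, X 1]) f := by
        simp only [mirrorCoordinates, map_aeval_pair, map_add, map_sub, aeval_X,
          Matrix.cons_val_zero, Matrix.cons_val_one, Matrix.smul_cons, Matrix.smul_empty, h0, h1]
    _ = (2 : R) ^ r • f := by rw [aeval_smul_of_isHomogeneous hf, aeval_X_pair]

namespace tripleSymmForms

variable {r : ℕ} {g : homogeneousSubmodule (Fin 2) R r}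

lemma coeff_mirrorCoordinates_of_odd [IsDomain R] [NeZero (2 : R)] (hg : g ∈ tripleSymmForms R r)
    {d : Fin 2 →₀ ℕ} (hd : Odd (d 1)) : coeff d (mirrorCoordinates R g.1) = 0 := by
  have heven : aeval ![X 0, -X 1] (mirrorCoordinates R g.1) = mirrorCoordinates R g.1 := by
    conv_rhs => rw [← hg.1]
    simp only [mirrorCoordinates, map_aeval_pair, map_add, map_sub, aeval_X, Matrix.cons_val_zero,
      Matrix.cons_val_one, sub_neg_eq_add, ← sub_eq_add_neg]
  have hcoeff := coeff_aeval_neg_right (mirrorCoordinates R g.1) d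
  rw [heven, hd.neg_one_pow, neg_one_mul, eq_neg_iff_add_eq_zero, ← two_mul] at hcoeff
  exact (mul_eq_zero.1 hcoeff).resolve_left two_ne_zero

lemma tripleDifference_pow_dvd (hg : g ∈ tripleSymmForms R r) {k : ℕ}
    (hdvd : (X 0 - X 1) ^ k ∣ g.1) (i : Fin 3) : tripleDifference R i ^ k ∣ g.1 := by
  let rotate : MvPolynomial (Fin 2) R →ₐ[R] MvPolynomial (Fin 2) R := aeval ![X 1, -X 0 - X 1]
  have hrotate {a b : MvPolynomial (Fin 2) R} (ha : a ^ k ∣ g.1) (hab : rotate a = b) :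
      b ^ k ∣ g.1 := by
    simpa only [map_pow, hab, show rotate g.1 = g.1 from hg.2] using map_dvd rotate ha
  have h1 : (X 0 + 2 * X 1) ^ k ∣ g.1 := hrotate hdvd <| by
    simp only [rotate, map_sub, aeval_X, Matrix.cons_val_zero, Matrix.cons_val_one]
    ring
  have h2 : (-2 * X 0 - X 1) ^ k ∣ g.1 := hrotate h1 <| by
    simp only [rotate, map_add, map_mul, map_ofNat, aeval_X, Matrix.cons_val_zero,
      Matrix.cons_val_one]
    ring
  fin_cases i
  exacts [hdvd, h1, h2]

end tripleSymmForms

end Ring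

lemma pairwise_isRelPrime_tripleDifference {F : Type*} [Field F] [NeZero (3 : F)] :
    Pairwise (Function.onFun IsRelPrime (tripleDifference F)) := fun i _ hij =>
  isRelPrime_of_eval_eq_zero (isHomogeneous_tripleDifference i) (tripleDifference_ne_zero i)
    (eval_tripleDifference_self i) (eval_tripleDifference_ne_zero hij)

namespace tripleSymmForms

variable {F : Type*} [Field F] [NeZero (2 : F)] {r : ℕ}

lemma X_sub_X_pow_dvd {m : ℕ} {g : homogeneousSubmodule (Fin 2) F r} (hg : g ∈ tripleSymmForms F r)
    (hcoeff : ∀ i < m, coeff (binaryExponent r (2 * i)) (mirrorCoordinates F g.1) = 0) :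
    (X 0 - X 1) ^ (2 * m) ∣ g.1 := by
  have hX : X 1 ^ (2 * m) ∣ mirrorCoordinates F g.1 := by
    refine X_pow_dvd_of_coeff_eq_zero fun d hd => ?_
    rcases Nat.even_or_odd' (d 1) with ⟨i, hi | hi⟩
    · by_cases hdr : d.degree = r
      · rw [eq_binaryExponent_degree d, hdr, hi]
        exact hcoeff i (by omega)
      · exact (isHomogeneous_mirrorCoordinates g.2).coeff_eq_zero hdr
    · exact coeff_mirrorCoordinates_of_odd hg ⟨i, hi⟩
  have hdvd : (X 0 - X 1) ^ (2 * m) ∣ (2 : F) ^ r • g.1 := by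
    rw [← mirrorCoordinates_mirrorCoordinates g.2]
    simpa only [map_pow, mirrorCoordinates, aeval_X, Matrix.cons_val_one,
      Matrix.cons_val_fin_one] using map_dvd (mirrorCoordinates F) hX
  simpa only [inv_smul_smul₀ (pow_ne_zero r (two_ne_zero' F))] using
    dvd_smul_of_dvd ((2 : F) ^ r)⁻¹ hdvd

variable [NeZero (3 : F)]

lemma eq_zero_of_coeff_eq_zero {m : ℕ} (hm : r < 6 * m) {g : homogeneousSubmodule (Fin 2) F r}
    (hg : g ∈ tripleSymmForms F r)
    (hcoeff : ∀ i < m, coeff (binaryExponent r (2 * i)) (mirrorCoordinates F g.1) = 0) :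
    g = 0 := by
  have hdeg : g.1.totalDegree < Fintype.card (Fin 3) * (2 * m) := by
    have hle : g.1.totalDegree ≤ r := IsHomogeneous.totalDegree_le g.2
    rw [Fintype.card_fin]
    omega
  exact Subtype.ext <| eq_zero_of_forall_pow_dvd isHomogeneous_tripleDifference
    tripleDifference_ne_zero pairwise_isRelPrime_tripleDifference
    (tripleDifference_pow_dvd hg (X_sub_X_pow_dvd hg hcoeff)) hdeg

variable (F r) in
lemma finrank_le : Module.finrank F (tripleSymmForms F r) ≤ r / 6 + 1 := by
  let coeffs : homogeneousSubmodule (Fin 2) F r →ₗ[F] Fin (r / 6 + 1) → F := LinearMap.pi fun i =>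
    lcoeff F (binaryExponent r (2 * i)) ∘ₗ (mirrorCoordinates F).toLinearMap ∘ₗ Submodule.subtype _
  have hdisj : Disjoint (tripleSymmForms F r) (LinearMap.ker coeffs) :=
    Submodule.disjoint_def.2 fun g hg hcoeff =>
      eq_zero_of_coeff_eq_zero (m := r / 6 + 1) (by omega) hg fun i hi => congrFun hcoeff ⟨i, hi⟩
  simpa only [finrank_top, Module.finrank_fin_fun] using
    finrank_le_of_disjoint_ker coeffs (q := ⊤) (fun _ _ => Submodule.mem_top) hdisj

end tripleSymmForms

end TripleSymmForms

section PhiOperator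

variable {r : ℕ}

lemma Phi_apply (f : MvPolynomial (Fin 2) ℝ) :
    Phi f = aeval ![X 0 + X 1, X 1] f + aeval ![X 0, X 0 + X 1] f :=
  rfl

lemma isHomogeneous_Phi {f : MvPolynomial (Fin 2) ℝ} (hf : f.IsHomogeneous r) :
    (Phi f).IsHomogeneous r :=
  have hX (i : Fin 2) : (X i : MvPolynomial (Fin 2) ℝ).IsHomogeneous 1 := isHomogeneous_X ℝ i
  (isHomogeneous_aeval_pair hf ((hX 0).add (hX 1)) (hX 1)).add
    (isHomogeneous_aeval_pair hf (hX 0) ((hX 0).add (hX 1)))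

/-- The operator `Phi` on the forms of degree `r`. -/
noncomputable def PhiV (r : ℕ) : V r →ₗ[ℝ] V r :=
  Phi.restrict fun _ hf => isHomogeneous_Phi hf

lemma PhiV_add_smul_mem_tripleSymmForms {s : ℝ} (hs : s * s = 1) {f : V r}
    (hf : f ∈ symmParityForms ℝ r s) : PhiV r f + s • f ∈ tripleSymmForms ℝ r := by
  have hneg (a b : MvPolynomial (Fin 2) ℝ) : aeval ![-a, -b] f.1 = aeval ![a, b] f.1 := by
    rw [symmParityForms.aeval_neg_left hf, symmParityForms.aeval_neg_right hf, smul_smul, hs,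
      one_smul]
  have hcoe : (PhiV r f + s • f).1 =
      aeval ![X 0 + X 1, X 1] f.1 + aeval ![X 0, X 0 + X 1] f.1 + s • aeval ![X 0, X 1] f.1 := by
    rw [aeval_X_pair, ← Phi_apply]
    rfl
  have hsum : -X 0 - X 1 = (-(X 0 + X 1) : MvPolynomial (Fin 2) ℝ) := by ring
  constructor
  · simp only [hcoe, map_add, map_smul, map_aeval_pair, aeval_X, Matrix.cons_val_zero,
      Matrix.cons_val_one]
    rw [symmParityForms.aeval_swap hf (X 0) (X 1), symmParityForms.aeval_swap hf (X 0) (X 1 + X 0),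
      symmParityForms.aeval_swap hf (X 1 + X 0) (X 1), add_comm (X 1) (X 0),
      add_comm (aeval ![X 0, X 0 + X 1] f.1)]
  · simp only [hcoe, map_add, map_smul, map_aeval_pair, aeval_X, Matrix.cons_val_zero,
      Matrix.cons_val_one, hsum, ← sub_eq_add_neg, sub_add_cancel_right]
    rw [hneg (X 0), symmParityForms.aeval_neg_right hf (X 1) (X 0),
      symmParityForms.aeval_neg_right hf (X 1) (X 0 + X 1), smul_smul, hs, one_smul,
      symmParityForms.aeval_swap hf (X 0) (X 1), symmParityForms.aeval_swap hf (X 0 + X 1) (X 1)]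
    abel

lemma swapStar_eq_neg_of_mem_K {f : V r} (hf : f ∈ K r) : swapStar f.1 = -f.1 := by
  have hswap (h : MvPolynomial (Fin 2) ℝ) : swapStar (swapStar h) = h := by
    change aeval ![X 1, X 0] (aeval ![X 1, X 0] h) = h
    simp only [map_aeval_pair, aeval_X, Matrix.cons_val_zero, Matrix.cons_val_one, aeval_X_pair]
  induction hf using Submodule.span_induction with
  | mem f hf =>
    obtain ⟨h, hfh⟩ := hf
    rw [hfh, map_sub, hswap, neg_sub]
  | zero => simp only [ZeroMemClass.coe_zero, map_zero, neg_zero]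
  | add f g _ _ hf hg => rw [Submodule.coe_add, map_add, hf, hg, neg_add]
  | smul c f _ hf => rw [Submodule.coe_smul, map_smul, hf, smul_neg]

lemma disjoint_symmParityForms_K (s : ℝ) : Disjoint (symmParityForms ℝ r s) (K r) := by
  refine Submodule.disjoint_def.2 fun f hf hfK => Subtype.ext ?_
  exact self_eq_neg.1 (hf.1.symm.trans (swapStar_eq_neg_of_mem_K hfK))

lemma finrank_symmParityForms_le {PhiSym : (V r ⧸ K r) →ₗ[ℝ] (V r ⧸ K r)}
    (hsym : PhiSym ∘ₗ (K r).mkQ = (K r).mkQ ∘ₗ PhiV r) {s : ℝ} (hs : s * s = 1) :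
    Module.finrank ℝ (symmParityForms ℝ r s) ≤
      r / 6 + 1 + Module.finrank ℝ (LinearMap.ker (PhiSym + s • LinearMap.id)) := by
  let T : V r →ₗ[ℝ] V r := PhiV r + s • LinearMap.id
  have hT : ∀ f ∈ symmParityForms ℝ r s, T f ∈ tripleSymmForms ℝ r := fun f hf => by
    rw [LinearMap.add_apply, LinearMap.smul_apply, LinearMap.id_apply]
    exact PhiV_add_smul_mem_tripleSymmForms hs hf
  have hmkQ : ∀ f ∈ symmParityForms ℝ r s ⊓ LinearMap.ker T,
      (K r).mkQ f ∈ LinearMap.ker (PhiSym + s • LinearMap.id) := fun f hf => by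
    have hcomm : PhiSym ((K r).mkQ f) = (K r).mkQ (PhiV r f) := LinearMap.congr_fun hsym f
    rw [LinearMap.mem_ker, LinearMap.add_apply, hcomm, LinearMap.smul_apply, LinearMap.id_apply,
      ← map_smul, ← map_add]
    exact (congrArg (K r).mkQ hf.2).trans (map_zero _)
  have hdisj : Disjoint (symmParityForms ℝ r s ⊓ LinearMap.ker T) (LinearMap.ker (K r).mkQ) := by
    rw [Submodule.ker_mkQ]
    exact (disjoint_symmParityForms_K s).mono_left inf_le_left
  exact (finrank_le_finrank_add_finrank_inf_ker T hT).trans <|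
    add_le_add (tripleSymmForms.finrank_le ℝ r) (finrank_le_of_disjoint_ker _ hmkQ hdisj)

end PhiOperator

/-- For even `r`, the sum of the dimensions of the eigenspaces of `Φ_sym` for the
eigenvalues `1` and `-1` is at least `(r-6)/6` if `r ≡ 0 (mod 6)`, at least `(r-2)/6`
if `r ≡ 2 (mod 6)`, and at least `(r+2)/6` if `r ≡ 4 (mod 6)`.  Here `Φ_sym` is the
operator induced by `Φ` on the quotient `V_sym = V / K`, characterized by the
compatibility hypothesis `hsym`. -/
theorem dim_eig_PhiSym_sum (r : ℕ) (hr : Even r)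
    (PhiSym : (↥(V r) ⧸ K r) →ₗ[ℝ] (↥(V r) ⧸ K r))
    (hsym : ∀ f g : ↥(V r),
      Phi (f : MvPolynomial (Fin 2) ℝ) = (g : MvPolynomial (Fin 2) ℝ) →
      PhiSym (Submodule.Quotient.mk f) = Submodule.Quotient.mk g) :
    (r % 6 = 0 → ((r : ℤ) - 6) / 6 ≤
      ((Module.finrank ℝ ↥(LinearMap.ker (PhiSym - LinearMap.id)) +
        Module.finrank ℝ ↥(LinearMap.ker (PhiSym + LinearMap.id)) : ℕ) : ℤ)) ∧
    (r % 6 = 2 → ((r : ℤ) - 2) / 6 ≤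
      ((Module.finrank ℝ ↥(LinearMap.ker (PhiSym - LinearMap.id)) +
        Module.finrank ℝ ↥(LinearMap.ker (PhiSym + LinearMap.id)) : ℕ) : ℤ)) ∧
    (r % 6 = 4 → ((r : ℤ) + 2) / 6 ≤
      ((Module.finrank ℝ ↥(LinearMap.ker (PhiSym - LinearMap.id)) +
        Module.finrank ℝ ↥(LinearMap.ker (PhiSym + LinearMap.id)) : ℕ) : ℤ)) := by
  have hcomm : PhiSym ∘ₗ (K r).mkQ = (K r).mkQ ∘ₗ PhiV r := LinearMap.ext fun f => hsym f _ rfl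
  have hneg : (r / 2 + 2) / 2 ≤
      r / 6 + 1 + Module.finrank ℝ (LinearMap.ker (PhiSym + LinearMap.id)) := by
    have h := (symmParityForms.le_finrank hr 0).trans
      (finrank_symmParityForms_le hcomm (by norm_num))
    rwa [pow_zero, one_smul] at h
  have hpos : (r / 2 + 2 - 1) / 2 ≤
      r / 6 + 1 + Module.finrank ℝ (LinearMap.ker (PhiSym - LinearMap.id)) := by
    have h := (symmParityForms.le_finrank hr 1).trans
      (finrank_symmParityForms_le hcomm (by norm_num))
    have hsub : PhiSym + (-1 : ℝ) • LinearMap.id = PhiSym - LinearMap.id := by module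
    rwa [pow_one, hsub] at h
  refine ⟨fun hmod => ?_, fun hmod => ?_, fun hmod => ?_⟩ <;> omega
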